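/- For every integer n > 2^7 = 128, every positive integer N, and every n-linear form U : (ℝ^N)^n → ℝ, one has (∑_{i₁,…,iₙ=1}^N |U(e_{i₁},…,e_{iₙ})|^{2n/(n+1)})^{(n+1)/(2n)} ≤ 1.306156 · (n-1)^{0.526322} · ‖U‖. -/

import Mathlib

open Real

/-- The Bohnenblust--Hille quantity of an `n`-linear form on `ℓ_∞^N` over `ℝ`:
`(∑_{i₁,…,iₙ} |U(e_{i₁},…,e_{iₙ})|^{2n/(n+1)})^{(n+1)/(2n)}`. -/
noncomputable def BHreal (n N : ℕ)
    (U : ContinuousMultilinearMap ℝ (fun _ : Fin n => (Fin N → ℝ)) ℝ) : ℝ :=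
  (∑ i : Fin n → Fin N,
      |U (fun k => Pi.single (i k) (1 : ℝ))| ^ ((2 * n : ℝ) / (n + 1)))
    ^ ((n + 1 : ℝ) / (2 * n))

open Finset MeasureTheory
open scoped BigOperators NNReal

/-!
Write `p_n = 2n / (n + 1)`, and let `K` be a Bohnenblust–Hille constant for `n`-linear forms. Put
a vector of random signs into one argument of an `(n + 1)`-linear form `U`: Khinchine's inequality
`‖a‖₂ ≤ exp (c (2 - p) / p) ‖∑ εᵢ aᵢ‖_p` with `p = p_n`, applied to each coefficient of the
resulting `n`-linear form, bounds a mixed `(p_n, 2)`-norm of the coefficients of `U` by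
`exp (c / n) * K * ‖U‖`. Blei's inequality, a consequence of the Hölder and Loomis–Whitney
inequalities, combines the `n + 1` mixed norms, one for each argument, into the `p_{n+1}`-norm.
Hence `exp (c H_{n-1})`, with `H` the harmonic numbers, is a constant for `n` arguments.

A Khinchine constant of this exponential form amounts to `1 ≤ exp ((2 - p) c) * 𝔼 |S|^p` for
normalized Rademacher sums `S`, and by `exp t ≥ 1 + t` it is enough that `𝔼 S² log |S| ≤ c`.
Bounding `log` by a cubic Taylor polynomial reduces this to moments of order at most 8, which
gives `c = log 2 - 85 / 384 < 0.472`, leaving room below `0.526322`.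
-/

theorem sum_prod_rpow_le_prod_sum_rpow {α κ : Type*} [Fintype α] (t : Finset κ)
    (f : κ → α → ℝ≥0) {w : κ → ℝ} (hw0 : ∀ j ∈ t, 0 ≤ w j) (hw1 : ∑ j ∈ t, w j = 1) :
    ∑ x, ∏ j ∈ t, f j x ^ w j ≤ ∏ j ∈ t, (∑ x, f j x) ^ w j := by
  let _ : MeasurableSpace α := ⊤
  have holder := ENNReal.lintegral_prod_norm_pow_le (μ := Measure.count) t
    (f := fun j x => (f j x : ENNReal)) (fun j _ => Measurable.of_discrete.aemeasurable) hw1 hw0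
  simp only [lintegral_fintype, Measure.count_singleton, mul_one] at holder
  rw [← ENNReal.coe_le_coe]
  push_cast
  refine le_of_eq_of_le (sum_congr rfl fun x _ => prod_congr rfl fun j hj => ?_)
    (holder.trans_eq (prod_congr rfl fun j hj => ?_))
  · exact ENNReal.coe_rpow_of_nonneg _ (hw0 j hj)
  · rw [ENNReal.coe_rpow_of_nonneg _ (hw0 j hj)]
    push_cast
    rfl

section LoomisWhitney

variable {α : Type*} {m : ℕ}

theorem removeNth_succ_cons (j : Fin (m + 1)) (a : α) (y : Fin (m + 1) → α) :
    j.succ.removeNth (Fin.cons a y : Fin (m + 2) → α) =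
      (Fin.cons a (j.removeNth y) : Fin (m + 1) → α) := by
  ext i
  refine Fin.cases ?_ (fun i => ?_) i <;> simp [Fin.removeNth]

variable [Fintype α]

theorem sum_eq_sum_sum_insertNth {M : Type*} [AddCommMonoid M]
    (j : Fin (m + 1)) (f : (Fin (m + 1) → α) → M) :
    ∑ x, f x = ∑ y : Fin m → α, ∑ a, f (j.insertNth a y) := by
  rw [← (Fin.insertNthEquiv (fun _ => α) j).sum_comp, Fintype.sum_prod_type, sum_comm]
  rfl

theorem sum_eq_sum_sum_cons {M : Type*} [AddCommMonoid M] (f : (Fin (m + 1) → α) → M) :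
    ∑ x, f x = ∑ a, ∑ y : Fin m → α, f (Fin.cons a y) := by
  rw [sum_eq_sum_sum_insertNth 0, sum_comm]
  simp only [Fin.insertNth_zero']

-- The estimate on one slice in the inductive proof of the Loomis–Whitney inequality.
theorem sum_mul_prod_removeNth_le (hm : 1 ≤ m)
    (loomisWhitney : ∀ g : Fin (m + 1) → (Fin m → α) → ℝ≥0,
      ∑ y : Fin (m + 1) → α, ∏ j, g j (j.removeNth y) ≤ ∏ j, (∑ z, g j z ^ (m : ℝ)) ^ (m : ℝ)⁻¹)
    (f : (Fin (m + 1) → α) → ℝ≥0) (g : Fin (m + 1) → (Fin m → α) → ℝ≥0) :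
    ∑ y, f y * ∏ j, g j (j.removeNth y) ≤
      (∑ y, f y ^ (m + 1 : ℝ)) ^ (m + 1 : ℝ)⁻¹ *
        ∏ j, (∑ z, g j z ^ (m + 1 : ℝ)) ^ (m + 1 : ℝ)⁻¹ := by
  have hm0 : (0 : ℝ) < m := by exact_mod_cast hm
  have hconj : Real.HolderConjugate (m + 1) ((m + 1) / m) := by
    refine Real.holderConjugate_iff.2 ⟨by linarith, ?_⟩
    field_simp
    ring
  refine (NNReal.inner_le_Lp_mul_Lq univ _ _ hconj).trans ?_
  rw [one_div]
  gcongr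
  simp only [← NNReal.finsetProd_rpow]
  refine (NNReal.rpow_le_rpow (loomisWhitney fun j z => g j z ^ ((m + 1 : ℝ) / m))
    (by positivity)).trans_eq ?_
  simp only [← NNReal.finsetProd_rpow, ← NNReal.rpow_mul, div_mul_cancel₀ _ hm0.ne', one_div_div]
  congr! 2
  field_simp

theorem loomis_whitney_inequality (hm : 1 ≤ m) (g : Fin (m + 1) → (Fin m → α) → ℝ≥0) :
    ∑ x : Fin (m + 1) → α, ∏ j, g j (j.removeNth x) ≤
      ∏ j, (∑ y, g j y ^ (m : ℝ)) ^ (m : ℝ)⁻¹ := by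
  induction m, hm using Nat.le_induction with
  | base =>
    have split (y : Fin 2 → α) :
        ∏ j, g j (j.removeNth y) = g 0 (fun _ => y 1) * g 1 (fun _ => y 0) := by
      rw [Fin.prod_univ_two]
      congr 2 <;> ext i <;> fin_cases i <;> rfl
    have constant (j : Fin 2) : ∑ a, g j (fun _ => a) = ∑ y, g j y :=
      (Equiv.funUnique (Fin 1) α).symm.sum_comp (g j)
    simp only [split, Nat.cast_one, NNReal.rpow_one, inv_one, ← constant]
    rw [Fin.prod_univ_two, sum_mul_sum, sum_comm, ← (finTwoArrowEquiv α).symm.sum_comp,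
      Fintype.sum_prod_type]
    rfl
  | succ m hm ih =>
    push_cast
    have weights : ∑ _j : Fin (m + 1), (m + 1 : ℝ)⁻¹ = 1 := by
      simp [Nat.cast_add_one_ne_zero]
    rw [sum_eq_sum_sum_cons, Fin.prod_univ_succ]
    simp only [Fin.prod_univ_succ (n := m + 1), removeNth_succ_cons, Fin.removeNth_zero,
      Fin.tail_cons]
    calc _ ≤ ∑ a, (∑ y, g 0 y ^ (m + 1 : ℝ)) ^ (m + 1 : ℝ)⁻¹ *
          ∏ j : Fin (m + 1), (∑ z : Fin m → α, g j.succ (Fin.cons a z) ^ (m + 1 : ℝ)) ^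
            (m + 1 : ℝ)⁻¹ :=
          sum_le_sum fun a _ => sum_mul_prod_removeNth_le hm ih (g 0) fun j z =>
            g j.succ (Fin.cons a z)
      _ ≤ _ := by
          rw [← mul_sum]
          gcongr
          refine (sum_prod_rpow_le_prod_sum_rpow univ _ (fun _ _ => by positivity)
            weights).trans_eq ?_
          simp only [sum_eq_sum_sum_cons (m := m)]

end LoomisWhitney

section Blei

variable {α : Type*} [Fintype α] {m : ℕ}

/-- The sums of `b` over the lines in the `j`-th coordinate direction, as a function of the
remaining coordinates. -/
def lineSum (b : (Fin (m + 1) → α) → ℝ≥0) (j : Fin (m + 1)) (y : Fin m → α) : ℝ≥0 :=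
  ∑ a, b (j.insertNth a y)

theorem le_lineSum_removeNth (b : (Fin (m + 1) → α) → ℝ≥0) (j : Fin (m + 1)) (x : Fin (m + 1) → α) :
    b x ≤ lineSum b j (j.removeNth x) := by
  simpa only [lineSum, Fin.insertNth_self_removeNth] using
    single_le_sum_of_canonicallyOrdered (f := fun a => b (j.insertNth a (j.removeNth x)))
      (mem_univ (x j))

theorem sum_mul_lineSum_removeNth_rpow (b : (Fin (m + 1) → α) → ℝ≥0) (j : Fin (m + 1)) {s : ℝ}
    (hs : 1 + s ≠ 0) :
    ∑ x, b x * lineSum b j (j.removeNth x) ^ s = ∑ y, lineSum b j y ^ (1 + s) := by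
  rw [sum_eq_sum_sum_insertNth j]
  refine sum_congr rfl fun y _ => ?_
  simp only [Fin.removeNth_insertNth, ← sum_mul]
  change lineSum b j y * _ = _
  rcases eq_or_ne (lineSum b j y) 0 with h | _
  · rw [h, zero_mul, NNReal.zero_rpow hs]
  · rw [NNReal.rpow_one_add' hs]

theorem rpow_eq_prod_lineSum_removeNth_rpow (b : (Fin (m + 1) → α) → ℝ≥0) (x : Fin (m + 1) → α) :
    b x ^ ((m + 1 : ℝ) / (m + 2)) =
      (∏ j, lineSum b j (j.removeNth x) ^ (m + 1 : ℝ)⁻¹) ^ (m + 2 : ℝ)⁻¹ *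
        ∏ j, (b x * lineSum b j (j.removeNth x) ^ (-(m + 1 : ℝ)⁻¹)) ^ (m + 2 : ℝ)⁻¹ := by
  rcases eq_or_ne (b x) 0 with hb | hb
  · have hm : (0 : ℝ) < m + 2 := by positivity
    simp only [hb, zero_mul, NNReal.zero_rpow (inv_pos.2 hm).ne', prod_const, card_univ,
      Fintype.card_fin, zero_pow (Nat.succ_ne_zero m), mul_zero]
    exact NNReal.zero_rpow (by positivity)
  · have cancel (j : Fin (m + 1)) : lineSum b j (j.removeNth x) ^ (m + 1 : ℝ)⁻¹ *
        (b x * lineSum b j (j.removeNth x) ^ (-(m + 1 : ℝ)⁻¹)) = b x := by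
      have hline : lineSum b j (j.removeNth x) ≠ 0 :=
        (hb.bot_lt.trans_le (le_lineSum_removeNth b j x)).ne'
      rw [mul_left_comm, ← NNReal.rpow_add hline, add_neg_cancel, NNReal.rpow_zero, mul_one]
    rw [← NNReal.finsetProd_rpow, ← prod_mul_distrib]
    simp only [← NNReal.mul_rpow, cancel, prod_const, card_univ, Fintype.card_fin]
    rw [← NNReal.rpow_mul_natCast, Nat.cast_add_one, inv_mul_eq_div]

theorem blei_inequality (hm : 1 ≤ m) (b : (Fin (m + 1) → α) → ℝ≥0) :
    ∑ x, b x ^ ((m + 1 : ℝ) / (m + 2)) ≤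
      ∏ j, (∑ y, lineSum b j y ^ ((m : ℝ) / (m + 1))) ^ ((m + 1 : ℝ) / ((m + 2) * m)) := by
  have : (0 : ℝ) < m := by exact_mod_cast hm
  have holder := sum_prod_rpow_le_prod_sum_rpow (univ : Finset (Fin (m + 2)))
    (Fin.cons (fun x => ∏ j, lineSum b j (j.removeNth x) ^ (m + 1 : ℝ)⁻¹)
      fun j x => b x * lineSum b j (j.removeNth x) ^ (-(m + 1 : ℝ)⁻¹))
    (w := fun _ => (m + 2 : ℝ)⁻¹) (fun _ _ => by positivity)
    (by rw [sum_const, card_univ, Fintype.card_fin, nsmul_eq_mul]; push_cast; field_simp)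
  have hexp : 1 + -(m + 1 : ℝ)⁻¹ = m / (m + 1) := by
    field_simp
    ring
  have lines (j : Fin (m + 1)) := sum_mul_lineSum_removeNth_rpow b j
    (hexp.trans_ne (by positivity : (m / (m + 1) : ℝ) ≠ 0))
  have loomisWhitney := loomis_whitney_inequality hm fun j y => lineSum b j y ^ (m + 1 : ℝ)⁻¹
  simp only [Fin.prod_univ_succ (n := m + 1), Fin.cons_zero, Fin.cons_succ, lines, hexp,
    ← rpow_eq_prod_lineSum_removeNth_rpow] at holder
  simp only [← NNReal.rpow_mul, inv_mul_eq_div] at loomisWhitney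
  refine holder.trans <|
    (mul_le_mul_left (NNReal.rpow_le_rpow loomisWhitney (by positivity)) _).trans_eq ?_
  rw [← NNReal.finsetProd_rpow, ← prod_mul_distrib]
  refine prod_congr rfl fun j _ => ?_
  rw [← NNReal.rpow_mul, ← NNReal.rpow_add_of_nonneg _ (by positivity) (by positivity)]
  congr 1
  field_simp
  ring

end Blei

section Rademacher

variable {ι : Type*} {s : Finset ι} {i : ι}

/-- The Rademacher sum `∑ i ∈ s, εᵢ aᵢ`; a random choice of signs is the uniform average `𝔼 ε` over
`ε : ι → ℤˣ`. -/
def rademacherSum (s : Finset ι) (a : ι → ℝ) (ε : ι → ℤˣ) : ℝ :=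
  ∑ i ∈ s, ((ε i : ℤ) : ℝ) * a i

theorem rademacherSum_mulSingle_mul_of_notMem [DecidableEq ι] (hi : i ∉ s) (a : ι → ℝ) (u : ℤˣ)
    (ε : ι → ℤˣ) : rademacherSum s a (Pi.mulSingle i u * ε) = rademacherSum s a ε := by
  refine sum_congr rfl fun j hj => ?_
  rw [Pi.mul_apply, Pi.mulSingle_eq_of_ne (ne_of_mem_of_not_mem hj hi), one_mul]

variable [Fintype ι] [DecidableEq ι]

-- Flipping the `i`-th sign preserves the uniform measure, so its two values may be averaged.
theorem expect_comp_rademacherSum_insert (hi : i ∉ s) (a : ι → ℝ) (f : ℝ → ℝ) :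
    𝔼 ε, f (rademacherSum (insert i s) a ε) =
      𝔼 ε, (f (a i + rademacherSum s a ε) + f (-a i + rademacherSum s a ε)) / 2 := by
  have flip : 𝔼 ε, f (rademacherSum (insert i s) a ε) =
      𝔼 ε, f (rademacherSum (insert i s) a (Pi.mulSingle i (-1) * ε)) :=
    (Fintype.expect_equiv (Equiv.mulLeft (Pi.mulSingle i (-1))) _ _ fun _ => rfl).symm
  have average : 𝔼 ε, f (rademacherSum (insert i s) a ε) =
      𝔼 ε, (f (rademacherSum (insert i s) a ε) +
        f (rademacherSum (insert i s) a (Pi.mulSingle i (-1) * ε))) / 2 := by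
    rw [← expect_div, expect_add_distrib, ← flip, add_self_div_two]
  rw [average]
  refine expect_congr rfl fun ε _ => ?_
  have split (δ : ι → ℤˣ) :
      rademacherSum (insert i s) a δ = ((δ i : ℤ) : ℝ) * a i + rademacherSum s a δ :=
    sum_insert hi
  rw [split, split, rademacherSum_mulSingle_mul_of_notMem hi]
  rcases Int.units_eq_one_or (ε i) with h | h <;> simp [h, add_comm]

theorem expect_rademacherSum_pow_two (s : Finset ι) (a : ι → ℝ) :
    𝔼 ε, rademacherSum s a ε ^ 2 = ∑ i ∈ s, a i ^ 2 := by
  induction s using Finset.induction_on with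
  | empty => simp [rademacherSum]
  | insert i s hi ih =>
    have average (t : ℝ) : ((a i + t) ^ 2 + (-a i + t) ^ 2) / 2 = a i ^ 2 + t ^ 2 := by ring
    simp only [expect_comp_rademacherSum_insert hi a (· ^ 2), average, expect_add_distrib,
      Fintype.expect_const, ih, sum_insert hi]

theorem expect_rademacherSum_pow_four (s : Finset ι) (a : ι → ℝ) :
    𝔼 ε, rademacherSum s a ε ^ 4 = 3 * (∑ i ∈ s, a i ^ 2) ^ 2 - 2 * ∑ i ∈ s, a i ^ 4 := by
  induction s using Finset.induction_on with
  | empty => simp [rademacherSum]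
  | insert i s hi ih =>
    have average (t : ℝ) :
        ((a i + t) ^ 4 + (-a i + t) ^ 4) / 2 = a i ^ 4 + 6 * a i ^ 2 * t ^ 2 + t ^ 4 := by ring
    simp only [expect_comp_rademacherSum_insert hi a (· ^ 4), average, expect_add_distrib,
      Fintype.expect_const, ← mul_expect, ih, expect_rademacherSum_pow_two, sum_insert hi]
    ring

theorem expect_rademacherSum_pow_six (s : Finset ι) (a : ι → ℝ) :
    𝔼 ε, rademacherSum s a ε ^ 6 = 15 * (∑ i ∈ s, a i ^ 2) ^ 3 -
      30 * (∑ i ∈ s, a i ^ 2) * ∑ i ∈ s, a i ^ 4 + 16 * ∑ i ∈ s, a i ^ 6 := by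
  induction s using Finset.induction_on with
  | empty => simp [rademacherSum]
  | insert i s hi ih =>
    have average (t : ℝ) : ((a i + t) ^ 6 + (-a i + t) ^ 6) / 2 =
        a i ^ 6 + 15 * a i ^ 4 * t ^ 2 + 15 * a i ^ 2 * t ^ 4 + t ^ 6 := by ring
    simp only [expect_comp_rademacherSum_insert hi a (· ^ 6), average, expect_add_distrib,
      Fintype.expect_const, ← mul_expect, ih, expect_rademacherSum_pow_two,
      expect_rademacherSum_pow_four, sum_insert hi]
    ring

theorem expect_rademacherSum_pow_eight (s : Finset ι) (a : ι → ℝ) :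
    𝔼 ε, rademacherSum s a ε ^ 8 = 105 * (∑ i ∈ s, a i ^ 2) ^ 4 -
      420 * (∑ i ∈ s, a i ^ 2) ^ 2 * ∑ i ∈ s, a i ^ 4 + 140 * (∑ i ∈ s, a i ^ 4) ^ 2 +
      448 * (∑ i ∈ s, a i ^ 2) * ∑ i ∈ s, a i ^ 6 - 272 * ∑ i ∈ s, a i ^ 8 := by
  induction s using Finset.induction_on with
  | empty => simp [rademacherSum]
  | insert i s hi ih =>
    have average (t : ℝ) : ((a i + t) ^ 8 + (-a i + t) ^ 8) / 2 =
        a i ^ 8 + 28 * a i ^ 6 * t ^ 2 + 70 * a i ^ 4 * t ^ 4 + 28 * a i ^ 2 * t ^ 6 + t ^ 8 := by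
      ring
    simp only [expect_comp_rademacherSum_insert hi a (· ^ 8), average, expect_add_distrib,
      Fintype.expect_const, ← mul_expect, ih, expect_rademacherSum_pow_two,
      expect_rademacherSum_pow_four, expect_rademacherSum_pow_six, sum_insert hi]
    ring

end Rademacher

theorem log_le_taylor_three {u : ℝ} (hu : 0 < u) :
    log u ≤ (u - 1) - (u - 1) ^ 2 / 2 + (u - 1) ^ 3 / 3 := by
  let φ : ℝ → ℝ := fun x => log x - ((x - 1) - (x - 1) ^ 2 / 2 + (x - 1) ^ 3 / 3)
  have hφ (x : ℝ) (hx : 0 < x) : HasDerivAt φ (-(x - 1) ^ 3 / x) x := by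
    have h := (hasDerivAt_id x).sub_const 1
    refine ((hasDerivAt_log hx.ne').sub ((h.sub ((h.pow 2).div_const 2)).add
      ((h.pow 3).div_const 3))).congr_deriv ?_
    simp only [id_eq]
    field_simp
    ring
  have hmax : IsMaxOn φ (Set.Ioi 0) 1 := by
    refine isMaxOn_Ioi_of_deriv (hφ 1 one_pos).continuousAt
      (fun x hx => (hφ x hx.1).differentiableAt.differentiableWithinAt)
      (fun x hx => (hφ x (one_pos.trans hx)).differentiableAt.differentiableWithinAt)
      (fun x hx => ?_) (fun x hx => ?_)
    · rw [(hφ x hx.1).deriv]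
      refine div_nonneg (neg_nonneg.2 ?_) hx.1.le
      exact Odd.pow_nonpos (by decide) (sub_nonpos.2 hx.2.le)
    · have hx1 : 1 < x := hx
      rw [(hφ x (one_pos.trans hx)).deriv]
      refine div_nonpos_of_nonpos_of_nonneg (neg_nonpos.2 ?_) (one_pos.trans hx1).le
      exact pow_nonneg (sub_nonneg.2 hx1.le) 3
  have h : φ u ≤ φ 1 := hmax hu
  simpa [φ, sub_nonpos] using h

-- Expanding `log` at `x² = 4` rather than at `x² = 1` keeps the Gaussian mean of the bound small.
theorem sq_mul_log_abs_le (x : ℝ) : x ^ 2 * log |x| ≤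
    (log 2 - 11 / 12) * x ^ 2 + 3 / 8 * x ^ 4 - 3 / 64 * x ^ 6 + x ^ 8 / 384 := by
  rcases eq_or_ne x 0 with rfl | hx
  · simp
  have htaylor := log_le_taylor_three (u := x ^ 2 / 4) (by positivity)
  have hlog : log (x ^ 2 / 4) = 2 * log |x| - 2 * log 2 := by
    rw [log_div (by positivity) (by norm_num), log_abs, log_pow, show (4 : ℝ) = 2 ^ 2 by norm_num,
      log_pow]
    push_cast
    rfl
  rw [hlog] at htaylor
  calc x ^ 2 * log |x|
      ≤ x ^ 2 * (log 2 +
          ((x ^ 2 / 4 - 1) - (x ^ 2 / 4 - 1) ^ 2 / 2 + (x ^ 2 / 4 - 1) ^ 3 / 3) / 2) := by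
        gcongr
        linarith
    _ = _ := by ring

/-- The constant in the exponent of the Khinchine inequality below. It bounds `𝔼 S² log |S|` for
normalized Rademacher sums `S`: it is the Gaussian mean (moments 1, 3, 15, 105) of the polynomial
bounding `x² log |x|` in `sq_mul_log_abs_le`. -/
noncomputable def khinchineExponent : ℝ := log 2 - 85 / 384

theorem sum_pow_four_sq_le {ι : Type*} {s : Finset ι} {a : ι → ℝ} (ha : ∑ i ∈ s, a i ^ 2 = 1) :
    (∑ i ∈ s, a i ^ 4) ^ 2 ≤ ∑ i ∈ s, a i ^ 6 := by
  have h := sum_mul_sq_le_sq_mul_sq s a (fun i => a i ^ 3)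
  simpa only [ha, one_mul, ← pow_succ', ← pow_mul, Nat.reduceMul, Nat.reduceAdd] using h

section Khinchine

variable {ι : Type*} [Fintype ι] [DecidableEq ι]

theorem expect_sq_mul_log_abs_rademacherSum_le {s : Finset ι} {a : ι → ℝ}
    (ha : ∑ i ∈ s, a i ^ 2 = 1) :
    𝔼 ε, rademacherSum s a ε ^ 2 * log |rademacherSum s a ε| ≤ khinchineExponent := by
  have hbound : 𝔼 ε, rademacherSum s a ε ^ 2 * log |rademacherSum s a ε| ≤
      (log 2 - 11 / 12) + 3 / 8 * (3 - 2 * ∑ i ∈ s, a i ^ 4) -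
        3 / 64 * (15 - 30 * ∑ i ∈ s, a i ^ 4 + 16 * ∑ i ∈ s, a i ^ 6) +
        (105 - 420 * ∑ i ∈ s, a i ^ 4 + 140 * (∑ i ∈ s, a i ^ 4) ^ 2 +
          448 * ∑ i ∈ s, a i ^ 6 - 272 * ∑ i ∈ s, a i ^ 8) / 384 := by
    refine (expect_le_expect fun ε _ => sq_mul_log_abs_le (rademacherSum s a ε)).trans_eq ?_
    simp only [expect_add_distrib, expect_sub_distrib, ← mul_expect, ← expect_div,
      expect_rademacherSum_pow_two, expect_rademacherSum_pow_four, expect_rademacherSum_pow_six,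
      expect_rademacherSum_pow_eight, ha]
    ring
  -- Given `(∑ aᵢ⁴)² ≤ ∑ aᵢ⁶`, the non-Gaussian corrections are nonpositive coordinatewise.
  have hcorr : -(7 / 16) * ∑ i ∈ s, a i ^ 4 + 25 / 32 * ∑ i ∈ s, a i ^ 6
      - 17 / 24 * ∑ i ∈ s, a i ^ 8 ≤ 0 := by
    simp only [mul_sum, ← sum_add_distrib, ← sum_sub_distrib]
    refine sum_nonpos fun i _ => ?_
    have hquad : 0 ≤ 17 / 24 * (a i ^ 2) ^ 2 - 25 / 32 * a i ^ 2 + 7 / 16 := by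
      nlinarith [sq_nonneg (a i ^ 2 - 75 / 136)]
    nlinarith [mul_nonneg (pow_nonneg (sq_nonneg (a i)) 2) hquad]
  rw [khinchineExponent]
  linarith [sum_pow_four_sq_le ha]

theorem sq_add_mul_le_exp_mul_abs_rpow (c x : ℝ) {p : ℝ} (hp : 0 < p) :
    x ^ 2 + (2 - p) * (c * x ^ 2 - x ^ 2 * log |x|) ≤ exp ((2 - p) * c) * |x| ^ p := by
  rcases eq_or_ne x 0 with rfl | hx
  · simp [zero_rpow hp.ne']
  have hx0 : 0 < |x| := abs_pos.2 hx
  calc x ^ 2 + (2 - p) * (c * x ^ 2 - x ^ 2 * log |x|)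
      = x ^ 2 * ((2 - p) * (c - log |x|) + 1) := by ring
    _ ≤ x ^ 2 * exp ((2 - p) * (c - log |x|)) := by gcongr; exact add_one_le_exp _
    _ = exp ((2 - p) * c) * |x| ^ p := by
        rw [← sq_abs, ← rpow_natCast, rpow_def_of_pos hx0, rpow_def_of_pos hx0, ← exp_add,
          ← exp_add]
        congr 1
        push_cast
        ring

theorem one_le_exp_mul_expect_abs_rademacherSum_rpow {s : Finset ι} {a : ι → ℝ}
    (ha : ∑ i ∈ s, a i ^ 2 = 1) {p : ℝ} (hp0 : 0 < p) (hp2 : p ≤ 2) :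
    1 ≤ exp ((2 - p) * khinchineExponent) * 𝔼 ε, |rademacherSum s a ε| ^ p := by
  have htangent := expect_le_expect (s := univ) fun (ε : ι → ℤˣ) _ =>
    sq_add_mul_le_exp_mul_abs_rpow khinchineExponent (rademacherSum s a ε) hp0
  simp only [expect_add_distrib, ← mul_expect, expect_sub_distrib, expect_rademacherSum_pow_two,
    ha, mul_one] at htangent
  have hlog := mul_nonneg (sub_nonneg.2 hp2)
    (sub_nonneg.2 (expect_sq_mul_log_abs_rademacherSum_le ha))
  linarith

theorem khinchine_inequality (s : Finset ι) (a : ι → ℝ) {p : ℝ} (hp0 : 0 < p) (hp2 : p ≤ 2) :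
    (∑ i ∈ s, a i ^ 2) ^ (p / 2) ≤
      exp ((2 - p) * khinchineExponent) * 𝔼 ε, |rademacherSum s a ε| ^ p := by
  obtain hσ | hσ := (sum_nonneg fun i (_ : i ∈ s) => sq_nonneg (a i)).eq_or_lt
  · rw [← hσ, zero_rpow (by positivity)]
    exact mul_nonneg (exp_pos _).le (expect_nonneg fun ε _ => by positivity)
  set σ := √(∑ i ∈ s, a i ^ 2)
  have hσ0 : 0 < σ := sqrt_pos.2 hσ
  have hσ2 : σ ^ 2 = ∑ i ∈ s, a i ^ 2 := sq_sqrt hσ.le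
  have hnormalized := one_le_exp_mul_expect_abs_rademacherSum_rpow (s := s) (a := fun i => a i / σ)
    (by simp only [div_pow, ← sum_div, hσ2, div_self hσ.ne']) hp0 hp2
  have hscale (ε : ι → ℤˣ) :
      |rademacherSum s (fun i => a i / σ) ε| ^ p = |rademacherSum s a ε| ^ p / σ ^ p := by
    simp only [rademacherSum, ← mul_div_assoc, ← sum_div]
    rw [abs_div, abs_of_pos hσ0, div_rpow (abs_nonneg _) hσ0.le]
  simp only [hscale, ← expect_div] at hnormalized
  rw [← mul_div_assoc, le_div_iff₀ (by positivity), one_mul] at hnormalized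
  rwa [← hσ2, ← rpow_natCast, ← rpow_mul hσ0.le, Nat.cast_ofNat, mul_div_cancel₀ p two_ne_zero]

end Khinchine

section BohnenblustHille

/-- The Bohnenblust–Hille exponent `2n / (n + 1)` of `n`-linear forms. -/
noncomputable def bhExponent (n : ℕ) : ℝ := (2 * n) / (n + 1)

theorem bhExponent_pos {n : ℕ} (hn : 1 ≤ n) : 0 < bhExponent n := by
  rw [bhExponent]
  positivity

theorem two_sub_bhExponent (n : ℕ) : 2 - bhExponent n = 2 / (n + 1) := by
  rw [bhExponent]
  field_simp
  ring

theorem bhExponent_le_two (n : ℕ) : bhExponent n ≤ 2 := by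
  rw [← sub_nonneg, two_sub_bhExponent]
  positivity

theorem blei_inequality_bhExponent {α : Type*} [Fintype α] {m : ℕ} (hm : 1 ≤ m)
    (c : (Fin (m + 1) → α) → ℝ) :
    ∑ x, |c x| ^ bhExponent (m + 1) ≤
      ∏ j : Fin (m + 1), (∑ y : Fin m → α, (∑ a, c (j.insertNth a y) ^ 2) ^ (bhExponent m / 2)) ^
        (bhExponent (m + 1) / (2 * m)) := by
  have blei := NNReal.coe_le_coe.2 (blei_inequality hm fun x => ‖c x‖₊ ^ 2)
  simp only [lineSum] at blei
  push_cast at blei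
  simp only [norm_eq_abs, sq_abs] at blei
  have hroot : (m / (m + 1) : ℝ) = bhExponent m / 2 := by rw [bhExponent]; ring
  have hpower : ((m + 1) / ((m + 2) * m) : ℝ) = bhExponent (m + 1) / (2 * m) := by
    rw [bhExponent]
    push_cast
    field_simp
    ring
  have hsq (x : Fin (m + 1) → α) :
      (c x ^ 2) ^ ((m + 1) / (m + 2) : ℝ) = |c x| ^ bhExponent (m + 1) := by
    rw [← sq_abs, ← rpow_natCast_mul (abs_nonneg _), bhExponent]
    congr 1
    push_cast
    ring
  simpa only [hroot, hpower, hsq] using blei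

theorem sum_abs_rpow_bhExponent_succ_le_of_forall_le {α : Type*} [Fintype α] {m : ℕ} (hm : 1 ≤ m)
    {c : (Fin (m + 1) → α) → ℝ} {B : ℝ} (hB : 0 ≤ B)
    (hc : ∀ j : Fin (m + 1), ∑ y : Fin m → α,
      (∑ a, c (j.insertNth a y) ^ 2) ^ (bhExponent m / 2) ≤ B ^ bhExponent m) :
    ∑ x, |c x| ^ bhExponent (m + 1) ≤ B ^ bhExponent (m + 1) := by
  have : 0 ≤ bhExponent (m + 1) := (bhExponent_pos m.succ_pos).le
  calc ∑ x, |c x| ^ bhExponent (m + 1)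
      ≤ ∏ _j : Fin (m + 1), (B ^ bhExponent m) ^ (bhExponent (m + 1) / (2 * m)) := by
        refine (blei_inequality_bhExponent hm c).trans (prod_le_prod (fun j _ => by positivity)
          fun j _ => rpow_le_rpow (by positivity) (hc j) (by positivity))
    _ = B ^ bhExponent (m + 1) := by
        rw [prod_const, card_univ, Fintype.card_fin, ← rpow_mul hB, ← rpow_mul_natCast hB]
        congr 1
        rw [bhExponent]
        push_cast
        field_simp

theorem norm_curryMid_apply_le_norm {ι : Type*} [Fintype ι] {n : ℕ}
    (U : ContinuousMultilinearMap ℝ (fun _ : Fin (n + 1) => ι → ℝ) ℝ) (j : Fin (n + 1))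
    {v : ι → ℝ} (hv : ‖v‖ ≤ 1) : ‖U.curryMid j v‖ ≤ ‖U‖ := by
  simpa only [ContinuousMultilinearMap.norm_curryMid, mul_one] using
    (U.curryMid j).le_opNorm_of_le hv

variable {ι : Type*} [Fintype ι] [DecidableEq ι] {n : ℕ}

/-- The coefficient `U(e_{x₁}, …, e_{xₙ})` of an `n`-linear form on `ℓ_∞(ι)`. -/
def basisCoeff (U : ContinuousMultilinearMap ℝ (fun _ : Fin n => ι → ℝ) ℝ) (x : Fin n → ι) : ℝ :=
  U fun i => Pi.single (x i) 1

theorem abs_basisCoeff_le_norm (U : ContinuousMultilinearMap ℝ (fun _ : Fin n => ι → ℝ) ℝ)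
    (x : Fin n → ι) : |basisCoeff U x| ≤ ‖U‖ := by
  simpa [basisCoeff, Pi.norm_single] using U.le_opNorm fun i => Pi.single (x i) (1 : ℝ)

theorem basisCoeff_curryMid
    (U : ContinuousMultilinearMap ℝ (fun _ : Fin (n + 1) => ι → ℝ) ℝ) (j : Fin (n + 1))
    (v : ι → ℝ) (y : Fin n → ι) :
    basisCoeff (U.curryMid j v) y = ∑ a, v a * basisCoeff U (j.insertNth a y) := by
  have single (a : ι) :
      basisCoeff (U.curryMid j (Pi.single a 1)) y = basisCoeff U (j.insertNth a y) := by
    refine congrArg U (funext fun i => ?_)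
    refine Fin.succAboveCases j ?_ (fun i => ?_) i <;> simp
  conv_lhs => rw [pi_eq_sum_univ' v]
  simp only [← single]
  simp only [basisCoeff, map_sum, map_smul, _root_.sum_apply, smul_apply, smul_eq_mul]

theorem sum_abs_basisCoeff_insertNth_le_norm
    (U : ContinuousMultilinearMap ℝ (fun _ : Fin (n + 1) => ι → ℝ) ℝ) (j : Fin (n + 1))
    (y : Fin n → ι) : ∑ a, |basisCoeff U (j.insertNth a y)| ≤ ‖U‖ := by
  let signs : ι → ℝ := fun a => SignType.sign (basisCoeff U (j.insertNth a y))
  have hsigns : ‖signs‖ ≤ 1 := (pi_norm_le_iff_of_nonneg zero_le_one).2 fun a => by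
    cases h : SignType.sign (basisCoeff U (j.insertNth a y)) <;> simp [signs, h]
  calc ∑ a, |basisCoeff U (j.insertNth a y)|
      = basisCoeff (U.curryMid j signs) y := by
        simp only [basisCoeff_curryMid, signs, sign_mul_self]
    _ ≤ ‖U.curryMid j signs‖ := (le_abs_self _).trans (abs_basisCoeff_le_norm _ _)
    _ ≤ ‖U‖ := norm_curryMid_apply_le_norm U j hsigns

variable (ι) in
/-- `K` is an admissible constant in the Bohnenblust–Hille inequality for real `n`-linear forms on
`ℓ_∞(ι)`, written with the power `bhExponent n` on both sides. -/
def IsBHConstant (n : ℕ) (K : ℝ) : Prop :=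
  ∀ U : ContinuousMultilinearMap ℝ (fun _ : Fin n => ι → ℝ) ℝ,
    ∑ x, |basisCoeff U x| ^ bhExponent n ≤ (K * ‖U‖) ^ bhExponent n

theorem isBHConstant_one : IsBHConstant ι 1 1 := by
  intro U
  have hexp : bhExponent 1 = 1 := by norm_num [bhExponent]
  simp only [hexp, rpow_one, one_mul]
  rw [sum_eq_sum_sum_insertNth 0, Fintype.sum_unique]
  exact sum_abs_basisCoeff_insertNth_le_norm U 0 default

theorem IsBHConstant.sum_sum_sq_rpow_le {K : ℝ} (hK : IsBHConstant ι n K) (hK0 : 0 ≤ K)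
    (hn : 1 ≤ n) (U : ContinuousMultilinearMap ℝ (fun _ : Fin (n + 1) => ι → ℝ) ℝ)
    (j : Fin (n + 1)) :
    ∑ y : Fin n → ι, (∑ a, basisCoeff U (j.insertNth a y) ^ 2) ^ (bhExponent n / 2) ≤
      exp ((2 - bhExponent n) * khinchineExponent) * (K * ‖U‖) ^ bhExponent n := by
  let form (ε : ι → ℤˣ) := U.curryMid j fun a => ((ε a : ℤ) : ℝ)
  have hform (ε : ι → ℤˣ) : ‖form ε‖ ≤ ‖U‖ := by
    refine norm_curryMid_apply_le_norm U j ((pi_norm_le_iff_of_nonneg zero_le_one).2 fun a => ?_)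
    rcases Int.units_eq_one_or (ε a) with h | h <;> simp [h]
  have hcoeff (ε : ι → ℤˣ) (y : Fin n → ι) :
      rademacherSum univ (fun a => basisCoeff U (j.insertNth a y)) ε = basisCoeff (form ε) y :=
    (basisCoeff_curryMid U j _ y).symm
  calc ∑ y : Fin n → ι, (∑ a, basisCoeff U (j.insertNth a y) ^ 2) ^ (bhExponent n / 2)
      ≤ ∑ y : Fin n → ι, exp ((2 - bhExponent n) * khinchineExponent) *
          𝔼 ε, |basisCoeff (form ε) y| ^ bhExponent n := by
        simp only [← hcoeff]
        exact sum_le_sum fun y _ =>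
          khinchine_inequality univ _ (bhExponent_pos hn) (bhExponent_le_two n)
    _ = exp ((2 - bhExponent n) * khinchineExponent) *
          𝔼 ε, ∑ y, |basisCoeff (form ε) y| ^ bhExponent n := by
        rw [← mul_sum, expect_sum_comm]
    _ ≤ exp ((2 - bhExponent n) * khinchineExponent) * (K * ‖U‖) ^ bhExponent n := by
        gcongr
        refine expect_le univ_nonempty fun ε _ => (hK (form ε)).trans ?_
        have := hform ε
        have := (bhExponent_pos hn).le
        gcongr

theorem IsBHConstant.succ {K : ℝ} (hK : IsBHConstant ι n K) (hK0 : 0 ≤ K) (hn : 1 ≤ n) :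
    IsBHConstant ι (n + 1) (exp (khinchineExponent / n) * K) := by
  intro U
  refine sum_abs_rpow_bhExponent_succ_le_of_forall_le hn (by positivity) fun j =>
    (hK.sum_sum_sq_rpow_le hK0 hn U j).trans_eq ?_
  rw [mul_assoc, mul_rpow (exp_pos _).le (by positivity), ← exp_mul, two_sub_bhExponent, bhExponent]
  congr 2
  field_simp

theorem isBHConstant_exp_harmonic (k : ℕ) :
    IsBHConstant ι (k + 1) (exp (khinchineExponent * harmonic k)) := by
  induction k with
  | zero => simpa using isBHConstant_one (ι := ι)
  | succ k ih =>
    convert ih.succ (exp_pos _).le k.succ_pos using 1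
    rw [← exp_add, harmonic_succ]
    push_cast
    ring_nf

theorem IsBHConstant.sum_rpow_rpow_inv_le {K : ℝ} (hK : IsBHConstant ι n K) (hK0 : 0 ≤ K)
    (hn : 1 ≤ n) (U : ContinuousMultilinearMap ℝ (fun _ : Fin n => ι → ℝ) ℝ) :
    (∑ x, |basisCoeff U x| ^ bhExponent n) ^ (bhExponent n)⁻¹ ≤ K * ‖U‖ :=
  (rpow_inv_le_iff_of_pos (by positivity) (by positivity) (bhExponent_pos hn)).2 (hK U)

end BohnenblustHille

theorem harmonic_le_harmonic_sub_log_add_log {m k : ℕ} (hm : 1 ≤ m) (hmk : m ≤ k) :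
    (harmonic k : ℝ) ≤ harmonic m - log m + log k := by
  have h := strictAnti_eulerMascheroniSeq'.antitone hmk
  simp only [eulerMascheroniSeq', Nat.one_le_iff_ne_zero.1 hm,
    Nat.one_le_iff_ne_zero.1 (hm.trans hmk), if_false] at h
  linarith

theorem exp_khinchineExponent_mul_harmonic_le {k : ℕ} (hk : 4 ≤ k) :
    exp (khinchineExponent * harmonic k) ≤ 1.306156 * (k : ℝ) ^ (0.526322 : ℝ) := by
  have hk0 : (0 : ℝ) < k := by positivity
  have hlog4 : log (4 : ℕ) = 2 * log 2 := by
    rw [← Nat.cast_two, ← log_pow]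
    norm_num
  have hlogk : 2 * log 2 ≤ log k := hlog4 ▸ log_le_log (by norm_num) (by exact_mod_cast hk)
  have hharmonic : (harmonic k : ℝ) ≤ 25 / 12 - 2 * log 2 + log k := by
    refine (harmonic_le_harmonic_sub_log_add_log (by norm_num) hk).trans_eq ?_
    rw [hlog4]
    norm_num [harmonic, sum_range_succ]
  have hpos : (0 : ℝ) < harmonic k := by exact_mod_cast harmonic_pos (by positivity)
  have hlogC : 0.2655 ≤ log 1.306156 := by
    refine le_trans (by norm_num) ((le_log_one_add_of_nonneg (x := 0.306156) (by norm_num)).trans_eq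
      (by norm_num))
  have hc : khinchineExponent ≤ 0.472 := by
    rw [khinchineExponent]
    linarith [log_two_lt_d9]
  rw [← exp_log (show (0 : ℝ) < 1.306156 by norm_num), rpow_def_of_pos hk0, ← exp_add, exp_le_exp]
  calc khinchineExponent * harmonic k ≤ 0.472 * (25 / 12 - 2 * log 2 + log k) :=
        mul_le_mul hc hharmonic hpos.le (by norm_num)
    _ ≤ log 1.306156 + log k * 0.526322 := by linarith [log_two_gt_d9]

theorem stmt7_general {ι : Type*} [Fintype ι] [DecidableEq ι] {n : ℕ} (hn : 5 ≤ n)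
    (U : ContinuousMultilinearMap ℝ (fun _ : Fin n => ι → ℝ) ℝ) :
    (∑ i : Fin n → ι, |U (fun k => Pi.single (i k) (1 : ℝ))| ^ ((2 * n : ℝ) / (n + 1))) ^
        ((n + 1 : ℝ) / (2 * n)) ≤
      1.306156 * ((n : ℝ) - 1) ^ (0.526322 : ℝ) * ‖U‖ := by
  obtain ⟨k, rfl⟩ := Nat.exists_eq_add_of_le' ((by norm_num : 1 ≤ 5).trans hn)
  have hBH := (isBHConstant_exp_harmonic k).sum_rpow_rpow_inv_le (exp_pos _).le k.succ_pos U
  simp only [basisCoeff, bhExponent, inv_div] at hBH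
  refine hBH.trans ?_
  rw [Nat.cast_add_one, add_sub_cancel_right]
  gcongr
  exact exp_khinchineExponent_mul_harmonic_le (Nat.le_of_succ_le_succ hn)

theorem stmt7 (n : ℕ) (hn : 2 ^ 7 < n) (N : ℕ) (hN : 0 < N)
    (U : ContinuousMultilinearMap ℝ (fun _ : Fin n => (Fin N → ℝ)) ℝ) :
    BHreal n N U ≤ 1.306156 * ((n : ℝ) - 1) ^ (0.526322 : ℝ) * ‖U‖ :=
  stmt7_general (by omega) U
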